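/- Let B1, B2 be two commuting nilpotent endomorphisms of a finite-dimensional complex vector space V. Then there exists a nilpotent endomorphism B2' of V and a vector w ∈ V such that: (i) B2' commutes with B1; (ii) every linear combination αB2 + βB2' (α, β ∈ ℂ) is nilpotent; (iii) w is a cyclic vector for the pair (B1, B2'), i.e. the vectors B1^a (B2')^b w span V. -/

import Mathlib

universe u

/-- Last nonvanishing power. -/
theorem aux_last {R : Type*} [MonoidWithZero R] (a b : R) (ha : a ≠ 0) (hb : IsNilpotent b) :
    ∃ k : ℕ, a * b ^ k ≠ 0 ∧ a * b ^ (k + 1) = 0 := by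
  classical
  have h : ∃ m : ℕ, a * b ^ m = 0 := by
    obtain ⟨m, hm⟩ := hb
    exact ⟨m, by rw [hm, mul_zero]⟩
  have h0 : Nat.find h ≠ 0 := by
    intro h0
    have := Nat.find_spec h
    rw [h0] at this
    simp at this
    exact ha this
  obtain ⟨k, hk⟩ := Nat.exists_eq_succ_of_ne_zero h0
  refine ⟨k, Nat.find_min h (by omega), ?_⟩
  have := Nat.find_spec h
  rwa [hk] at this

section aux

variable {V : Type u} [AddCommGroup V] [Module ℂ V]

/-- If some power of `N` lands in the range of a commuting nilpotent, then `N` is nilpotent. -/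
theorem aux_nil (t N : Module.End ℂ V) (ht : IsNilpotent t) (hc : Commute t N)
    (k : ℕ) (h : ∀ v, ∃ x, (N ^ k) v = t x) : IsNilpotent N := by
  obtain ⟨m, hm⟩ := ht
  have key : ∀ j : ℕ, ∀ v, ∃ x, (N ^ (k * j)) v = (t ^ j) x := by
    intro j
    induction j with
    | zero => intro v; exact ⟨v, by simp⟩
    | succ j ih =>
      intro v
      obtain ⟨x, hx⟩ := h v
      obtain ⟨y, hy⟩ := ih x
      refine ⟨y, ?_⟩
      have hc2 : Commute t (N ^ (k * j)) := hc.pow_right _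
      rw [Nat.mul_succ, pow_add, Module.End.mul_apply, hx, ← Module.End.mul_apply, ← hc2.eq,
        Module.End.mul_apply, hy, pow_succ', Module.End.mul_apply]
  refine ⟨k * m, ?_⟩
  ext v
  obtain ⟨x, hx⟩ := key m v
  rw [hx, hm]; simp

/-- Powers of congruent operators are congruent. -/
theorem aux_cong (t N : Module.End ℂ V) (hc : Commute t N) (U : Submodule ℂ V)
    (D : Module.End ℂ U) (h : ∀ u : U, ∃ x, N u = (D u : V) + t x) (k : ℕ) :
    ∀ u : U, ∃ x, (N ^ k) (u : V) = ((D ^ k) u : V) + t x := by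
  induction k with
  | zero => intro u; exact ⟨0, by simp⟩
  | succ k ih =>
    intro u
    obtain ⟨x, hx⟩ := ih u
    obtain ⟨y, hy⟩ := h ((D ^ k) u)
    refine ⟨y + N x, ?_⟩
    have : N (t x) = t (N x) := by
      rw [← Module.End.mul_apply, ← hc.eq, Module.End.mul_apply]
    rw [pow_succ', Module.End.mul_apply, hx, map_add, hy, this, pow_succ', Module.End.mul_apply,
      map_add, add_assoc]

/-- The map sending the dual cyclic vector to `w`. -/
noncomputable def auxS (t : Module.End ℂ V) (φ : V →ₗ[ℂ] ℂ) (n : ℕ) (w : V) : Module.End ℂ V :=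
  ∑ j ∈ Finset.range (n + 1), (φ ∘ₗ (t ^ (n - j))).smulRight ((t ^ j) w)

theorem auxS_apply (t : Module.End ℂ V) (φ : V →ₗ[ℂ] ℂ) (n : ℕ) (w v : V) :
    auxS t φ n w v = ∑ j ∈ Finset.range (n + 1), φ ((t ^ (n - j)) v) • (t ^ j) w := by
  simp [auxS, LinearMap.sum_apply]

theorem auxS_comm (t : Module.End ℂ V) (φ : V →ₗ[ℂ] ℂ) (n : ℕ) (ht : t ^ (n + 1) = 0) (w : V) :
    Commute t (auxS t φ n w) := by
  apply LinearMap.ext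
  intro v
  rw [Module.End.mul_apply, Module.End.mul_apply, auxS_apply, auxS_apply, map_sum,
    Finset.sum_range_succ, Finset.sum_range_succ']
  have e1 : t ((t ^ n) w) = 0 := by
    rw [← Module.End.mul_apply, ← pow_succ', ht]; simp
  have e2 : (t ^ (n - 0)) (t v) = 0 := by
    rw [← Module.End.mul_apply, ← pow_succ, Nat.sub_zero, ht]; simp
  rw [map_smul, e1, e2]
  simp only [smul_zero, add_zero, map_zero, zero_smul, map_smul]
  apply Finset.sum_congr rfl
  intro j hj
  have hj' := Finset.mem_range.1 hj
  rw [← Module.End.mul_apply, ← Module.End.mul_apply, ← pow_succ, ← pow_succ',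
    show n - (j + 1) + 1 = n - j by omega]

theorem auxS_e (t : Module.End ℂ V) (φ : V →ₗ[ℂ] ℂ) (n : ℕ) (w e : V)
    (h1 : φ ((t ^ n) e) = 1) (h2 : ∀ j < n, φ ((t ^ j) e) = 0) : auxS t φ n w e = w := by
  rw [auxS_apply, Finset.sum_range_succ', Finset.sum_eq_zero]
  · simp [h1]
  · intro j hj
    have hj' := Finset.mem_range.1 hj
    rw [h2 _ (by omega), zero_smul]

theorem auxS_S (t : Module.End ℂ V) (φ : V →ₗ[ℂ] ℂ) (n : ℕ) (ht : t ^ (n + 1) = 0) (w e v : V)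
    (h1 : φ ((t ^ n) e) = 1) (h2 : ∀ j < n, φ ((t ^ j) e) = 0) :
    auxS t φ n w (auxS t φ n e v) = auxS t φ n w v := by
  rw [auxS_apply t φ n e v, map_sum, auxS_apply t φ n w v]
  apply Finset.sum_congr rfl
  intro j _
  have hc := (auxS_comm t φ n ht w).pow_left j
  rw [map_smul, ← Module.End.mul_apply, ← hc.eq, Module.End.mul_apply, auxS_e t φ n w e h1 h2]

theorem aux_psi (t : Module.End ℂ V) (φ : V →ₗ[ℂ] ℂ) (n : ℕ) (ht : t ^ (n + 1) = 0) (x : V) :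
    φ ((t ^ n) (t x)) = 0 := by
  rw [← Module.End.mul_apply, ← pow_succ, ht]; simp

theorem auxS_range (t : Module.End ℂ V) (φ : V →ₗ[ℂ] ℂ) (n : ℕ) (w v : V) :
    ∃ x, auxS t φ n w v = φ ((t ^ n) v) • w + t x := by
  refine ⟨∑ j ∈ Finset.range n, φ ((t ^ (n - (j + 1))) v) • (t ^ j) w, ?_⟩
  rw [auxS_apply, Finset.sum_range_succ', map_sum, add_comm]
  congr 1
  apply Finset.sum_congr rfl
  intro j _
  rw [map_smul, pow_succ', Module.End.mul_apply]

theorem aux_e (t : Module.End ℂ V) (φ : V →ₗ[ℂ] ℂ) (n : ℕ) (ht : t ^ (n + 1) = 0)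
    (e0 : V) (h0 : φ ((t ^ n) e0) ≠ 0) :
    ∃ e, φ ((t ^ n) e) = 1 ∧ ∀ j < n, φ ((t ^ j) e) = 0 := by
  have hz : ∀ m, n + 1 ≤ m → t ^ m = 0 := fun m hm => pow_eq_zero_of_le hm ht
  have key : ∀ m ≤ n, ∃ e, φ ((t ^ n) e) = 1 ∧ ∀ j < n, n ≤ j + m → φ ((t ^ j) e) = 0 := by
    intro m
    induction m with
    | zero =>
      intro _
      exact ⟨(φ ((t ^ n) e0))⁻¹ • e0, by simp [h0], fun j hj hj' => by omega⟩
    | succ m ih =>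
      intro hm
      obtain ⟨e, he1, he2⟩ := ih (by omega)
      refine ⟨e - φ ((t ^ (n - (m + 1))) e) • (t ^ (m + 1)) e, ?_, ?_⟩
      · rw [map_sub, map_smul, ← Module.End.mul_apply, ← pow_add, hz (n + (m + 1)) (by omega)]
        simpa using he1
      · intro j hj hj'
        rw [map_sub, map_smul, ← Module.End.mul_apply, ← pow_add]
        rcases Nat.lt_or_ge (j + m) n with h | h
        · have hj2 : n - (m + 1) = j := by omega
          have hj3 : j + (m + 1) = n := by omega
          rw [hj2, hj3, map_sub, map_smul, he1]; simp
        · rw [hz (j + (m + 1)) (by omega)]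
          simpa using he2 j hj h
  obtain ⟨e, h1, h2⟩ := key n le_rfl
  exact ⟨e, h1, fun j hj => h2 j hj (by omega)⟩

end aux

theorem aux_main (d : ℕ) : ∀ (V : Type u) [AddCommGroup V] [Module ℂ V] [FiniteDimensional ℂ V]
    (_ : Module.finrank ℂ V = d)
    (B1 B2 : Module.End ℂ V) (_ : IsNilpotent B1) (_ : IsNilpotent B2)
    (_ : Commute B1 B2),
    ∃ (B2' : Module.End ℂ V) (w : V),
      Commute B1 B2' ∧
      (∀ α β : ℂ, IsNilpotent (α • B2 + β • B2')) ∧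
      Submodule.span ℂ (Set.range fun p : ℕ × ℕ => (B1 ^ p.1 * B2' ^ p.2) w) = ⊤ := by
  induction d using Nat.strong_induction_on with
  | _ d IH =>
  intro V _ _ _ hd t B ht hB hcomm
  rcases subsingleton_or_nontrivial V with hV | hV
  · refine ⟨0, 0, Commute.zero_right _, fun α β => ⟨1, Subsingleton.elim _ _⟩,
      Subsingleton.elim _ _⟩
  obtain ⟨n, hn0, hn⟩ := aux_last (1 : Module.End ℂ V) t one_ne_zero ht
  rw [one_mul] at hn0 hn
  obtain ⟨k, hk0, hk⟩ := aux_last (t ^ n) B hn0 hB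
  obtain ⟨e0, he0⟩ : ∃ e0, (t ^ n * B ^ k) e0 ≠ 0 := by
    by_contra! h
    exact hk0 (LinearMap.ext h)
  obtain ⟨φ0, hφ0⟩ : ∃ φ0 : Module.Dual ℂ V, φ0 ((t ^ n * B ^ k) e0) ≠ 0 := by
    by_contra! h
    exact he0 ((Module.forall_dual_apply_eq_zero_iff ℂ _).1 h)
  obtain ⟨φ, hφ⟩ : ∃ φ : V →ₗ[ℂ] ℂ, ∀ v, φ v = φ0 ((B ^ k) v) := ⟨φ0 ∘ₗ (B ^ k), fun v => rfl⟩
  have hψ : ∀ v, φ ((t ^ n) v) = φ0 ((t ^ n * B ^ k) v) := by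
    intro v
    rw [hφ, ← Module.End.mul_apply, (hcomm.pow_pow n k).eq]
  have hψB : ∀ v, φ ((t ^ n) (B v)) = 0 := by
    intro v
    rw [hψ, ← Module.End.mul_apply, mul_assoc, ← pow_succ, hk]; simp
  obtain ⟨e, h1, h2⟩ := aux_e t φ n hn e0 (by rw [hψ]; exact hφ0)
  set P := auxS t φ n e with hP
  have hPe : P e = e := auxS_e t φ n e e h1 h2
  have hPP : ∀ v, P (P v) = P v := fun v => auxS_S t φ n hn e e v h1 h2
  have hPc : Commute t P := auxS_comm t φ n hn e
  have hPt : ∀ v, P (t v) = t (P v) := fun v => by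
    rw [← Module.End.mul_apply, ← hPc.eq, Module.End.mul_apply]
  have hPpsi : ∀ v, φ ((t ^ n) (P v)) = φ ((t ^ n) v) := by
    intro v
    obtain ⟨x, hx⟩ := auxS_range t φ n e v
    rw [hP, hx, map_add, map_add, aux_psi t φ n hn, map_smul, map_smul, h1]; simp
  have hPr : ∀ v, φ ((t ^ n) v) = 0 → ∃ x, P v = t x := by
    intro v hv
    obtain ⟨x, hx⟩ := auxS_range t φ n e v
    exact ⟨x, by rw [hP, hx, hv, zero_smul, zero_add]⟩
  set U := LinearMap.ker P with hU
  have hUm : ∀ u : U, P u = 0 := fun u => LinearMap.mem_ker.1 u.2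
  have hUψ : ∀ u : U, φ ((t ^ n) (u : V)) = 0 := fun u => by
    rw [← hPpsi, hUm u]; simp
  have hlt : Module.finrank ℂ U < d := by
    rw [← hd]
    apply Submodule.finrank_lt
    intro htop
    have : e ∈ U := by rw [htop]; trivial
    have h0 : P e = 0 := LinearMap.mem_ker.1 this
    rw [hPe] at h0
    rw [h0] at h1
    simp at h1
  obtain ⟨Q, hQ⟩ : ∃ Q : V →ₗ[ℂ] U, ∀ v, (Q v : V) = v - P v := by
    refine ⟨LinearMap.codRestrict U (LinearMap.id - P) ?_, fun v => rfl⟩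
    intro v
    rw [LinearMap.mem_ker]
    simp [hPP]
  have hQU : ∀ u : U, Q u = u := fun u => Subtype.ext (by rw [hQ, hUm u, sub_zero])
  obtain ⟨tU, htU⟩ : ∃ tU : Module.End ℂ U, ∀ u : U, (tU u : V) = t u := by
    refine ⟨LinearMap.restrict t (p := U) (q := U) ?_, fun v => rfl⟩
    intro v hv
    rw [LinearMap.mem_ker] at hv ⊢
    rw [hPt, hv, map_zero]
  have htUp : ∀ (a : ℕ) (u : U), ((tU ^ a) u : V) = (t ^ a) u := by
    intro a
    induction a with
    | zero => intro u; simp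
    | succ a ih => intro u; rw [pow_succ', Module.End.mul_apply, htU, ih, pow_succ',
        Module.End.mul_apply]
  have htUn : IsNilpotent tU := ⟨n + 1, by
    ext u
    rw [htUp, hn]; simp⟩
  have hQt : ∀ v, Q (t v) = tU (Q v) := fun v => Subtype.ext (by
    rw [hQ, htU, hQ, map_sub, hPt])
  have hcv : ∀ v, B (t v) = t (B v) := fun v => by
    rw [← Module.End.mul_apply, ← hcomm.eq, Module.End.mul_apply]
  obtain ⟨C, hC⟩ : ∃ C : Module.End ℂ U, ∀ u : U, C u = Q (B u) :=
    ⟨Q ∘ₗ B ∘ₗ U.subtype, fun u => rfl⟩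
  have hCc : Commute tU C := LinearMap.ext fun u => by
    rw [Module.End.mul_apply, Module.End.mul_apply, hC, hC, htU, hcv, hQt]
  have hBC : ∀ u : U, ∃ x, B u = (C u : V) + t x := by
    intro u
    obtain ⟨x, hx⟩ := hPr (B u) (hψB u)
    exact ⟨x, by rw [hC, hQ, ← hx]; abel⟩
  have hCn : IsNilpotent C := by
    obtain ⟨m, hm⟩ := hB
    apply aux_nil tU C htUn hCc m
    intro u
    obtain ⟨x, hx⟩ := aux_cong t B hcomm U C hBC m u
    refine ⟨Q (-x), ?_⟩
    rw [← hQt, ← hQU ((C ^ m) u)]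
    congr 1
    rw [hm, LinearMap.zero_apply] at hx
    rw [map_neg]
    exact eq_neg_of_add_eq_zero_left hx.symm
  obtain ⟨C', w, hC'c, hC'n, hC's⟩ := IH _ hlt U rfl tU C htUn hCn hCc
  set S := auxS t φ n (w : V) with hS
  have hSc : Commute t S := auxS_comm t φ n hn w
  have hSe : S e = w := auxS_e t φ n w e h1 h2
  have hSP : ∀ v, S (P v) = S v := fun v => auxS_S t φ n hn w e v h1 h2
  have hSU : ∀ u : U, S u = 0 := fun u => by rw [← hSP, hUm u, map_zero]
  obtain ⟨B', hB'⟩ : ∃ B' : Module.End ℂ V, ∀ v, B' v = (C' (Q v) : V) + S v :=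
    ⟨U.subtype ∘ₗ C' ∘ₗ Q + S, fun v => rfl⟩
  have hB'U : ∀ u : U, B' u = C' u := fun u => by rw [hB', hQU, hSU, add_zero]
  have hB'c : Commute t B' := LinearMap.ext fun v => by
    have e1 : C' (tU (Q v)) = tU (C' (Q v)) := by
      rw [← Module.End.mul_apply, ← hC'c.eq, Module.End.mul_apply]
    have e2 : S (t v) = t (S v) := by
      rw [← Module.End.mul_apply, ← hSc.eq, Module.End.mul_apply]
    rw [Module.End.mul_apply, Module.End.mul_apply, hB', hB', hQt, e1, e2, htU, map_add]
  have hSψ : ∀ v, φ ((t ^ n) (S v)) = 0 := by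
    intro v
    obtain ⟨x, hx⟩ := auxS_range t φ n (w : V) v
    rw [hS, hx, map_add, map_add, aux_psi t φ n hn, map_smul, map_smul, hUψ]; simp
  have hB'ψ : ∀ v, φ ((t ^ n) (B' v)) = 0 := fun v => by
    rw [hB', map_add, map_add, hSψ, hUψ, add_zero]
  refine ⟨B', e, hB'c, ?_, ?_⟩
  · intro α β
    have hNc : Commute t (α • B + β • B') :=
      (hcomm.smul_right α).add_right (hB'c.smul_right β)
    set N := α • B + β • B' with hN
    have hNv : ∀ v, N v = α • B v + β • B' v := fun v => rfl
    obtain ⟨m, hm⟩ := hC'n α β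
    apply aux_nil t N ht hNc (m + 1)
    intro v
    have hψN : φ ((t ^ n) (N v)) = 0 := by
      rw [hNv, map_add, map_add, map_smul, map_smul, map_smul, map_smul, hψB, hB'ψ]; simp
    obtain ⟨x, hx⟩ := hPr _ hψN
    have hNU : ∀ u : U, ∃ x, N u = ((α • C + β • C') u : V) + t x := by
      intro u
      obtain ⟨x, hx⟩ := hBC u
      refine ⟨α • x, ?_⟩
      rw [hNv, hx, hB'U, map_smul]
      simp only [LinearMap.add_apply, LinearMap.smul_apply, Submodule.coe_add, Submodule.coe_smul]
      module
    obtain ⟨y, hy⟩ := aux_cong t N hNc U _ hNU m (Q (N v))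
    refine ⟨y + (N ^ m) x, ?_⟩
    have hdec : N v = (Q (N v) : V) + t x := by rw [hQ, ← hx]; abel
    rw [pow_succ, Module.End.mul_apply, hdec, map_add, hy, hm, LinearMap.zero_apply,
      Submodule.coe_zero, zero_add, map_add, ← Module.End.mul_apply, ← (hNc.pow_right m).eq,
      Module.End.mul_apply]
  · have hB'e : B' e = w := by
      have : Q e = 0 := Subtype.ext (by rw [hQ, hPe]; simp)
      rw [hB', this, hSe]; simp
    have hB'p : ∀ (b : ℕ) (u : U), (B' ^ b) (u : V) = ((C' ^ b) u : U) := by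
      intro b
      induction b with
      | zero => intro u; simp
      | succ b ih => intro u; rw [pow_succ', Module.End.mul_apply, ih, hB'U, pow_succ',
          Module.End.mul_apply]
    set M := Submodule.span ℂ (Set.range fun p : ℕ × ℕ => (t ^ p.1 * B' ^ p.2) e) with hM
    have hUM : ∀ u : U, (u : V) ∈ M := by
      have hle : (⊤ : Submodule ℂ U) ≤ M.comap U.subtype := by
        rw [← hC's, Submodule.span_le]
        rintro _ ⟨⟨a, b⟩, rfl⟩
        apply Submodule.subset_span
        refine ⟨(a, b + 1), ?_⟩
        simp only [Module.End.mul_apply, Submodule.coe_subtype]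
        rw [htUp, ← hB'p, pow_succ, Module.End.mul_apply, hB'e]
      exact fun u => hle (Submodule.mem_top (x := u))
    rw [eq_top_iff]
    intro v _
    have hv : v = (Q v : V) + P v := by rw [hQ]; abel
    rw [hv]
    refine M.add_mem (hUM _) ?_
    rw [hP, auxS_apply]
    refine Submodule.sum_mem _ fun j _ => M.smul_mem _ (Submodule.subset_span ⟨(j, 0), ?_⟩)
    simp

/-- Given commuting nilpotent endomorphisms `B₁, B₂` of a finite-dimensional complex
vector space, there is a nilpotent `B₂'` commuting with `B₁`, all of whose linear
combinations with `B₂` are nilpotent, and which together with `B₁` admits a cyclic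
vector `w`. -/
theorem stmt1 {V : Type*} [AddCommGroup V] [Module ℂ V] [FiniteDimensional ℂ V]
    (B1 B2 : Module.End ℂ V) (hn1 : IsNilpotent B1) (hn2 : IsNilpotent B2)
    (hcomm : Commute B1 B2) :
    ∃ (B2' : Module.End ℂ V) (w : V),
      IsNilpotent B2' ∧
      Commute B1 B2' ∧
      (∀ α β : ℂ, IsNilpotent (α • B2 + β • B2')) ∧
      Submodule.span ℂ (Set.range fun p : ℕ × ℕ => (B1 ^ p.1 * B2' ^ p.2) w) = ⊤ := by
  obtain ⟨B2', w, h1, h2, h3⟩ := aux_main _ V rfl B1 B2 hn1 hn2 hcomm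
  exact ⟨B2', w, by simpa using h2 0 1, h1, h2, h3⟩
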